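/- arXiv:0909.4787 — 8 statements merged into one kernel-verified Lean document; each statement's English description precedes it below -/
import Mathlib

section
/- Let P₁, P₂, P₃ be n×n complex matrices that are orthogonal projections (Pᵢ² = Pᵢ and Pᵢ is Hermitian) and pairwise orthogonal (PᵢPⱼ = 0 for i ≠ j). For each nonempty J ⊆ {1,2,3} set P_J := Σ_{i∈J} Pᵢ. Then for every positive semidefinite n×n matrix ρ and every Hermitian matrix D with 0 ≤ D ≤ I (i.e. D and I − D are positive semidefinite), the third-order interference expression vanishes: Tr[D·P_{123} ρ P_{123}] − (Tr[D·P_{12} ρ P_{12}] + Tr[D·P_{13} ρ P_{13}] + Tr[D·P_{23} ρ P_{23}]) + (Tr[D·P₁ ρ P₁] + Tr[D·P₂ ρ P₂] + Tr[D·P₃ ρ P₃]) = 0. -/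
open scoped ComplexOrder

/-!
The probability of passing the filter `P_J` and firing the detector is biadditive in the two
occurrences of `P_J`, so it is a sum of contributions of pairs of slits `(i, j) ∈ J × J`. In the
alternating sum over `J ⊆ s`, the contribution of `(i, j)` is weighted by the alternating count of
the sets between `{i, j}` and `s`, which vanishes as soon as `s` is strictly larger than `{i, j}`.
Hence there is no interference of order three or higher.
-/

section Interference

open Finset

variable {ι M M' N : Type*} [DecidableEq ι] [AddCommMonoid M] [AddCommMonoid M'] [AddCommGroup N]

/-- Sorkin's interference expression of order `#s` for the slits in `s`, where `F J` is the
probability of detection with exactly the slits in `J` open. The sign is normalised so that `F s`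
has coefficient `1`, and `J = ∅` is included: Sorkin's own expression is the case `F ∅ = 0`. -/
def interference (F : Finset ι → N) (s : Finset ι) : N :=
  ∑ J ∈ s.powerset, (-1 : ℤ) ^ #(s \ J) • F J

theorem interference_empty (F : Finset ι → N) : interference F ∅ = F ∅ := by
  simp [interference]

theorem interference_insert (F : Finset ι → N) {a : ι} {s : Finset ι} (ha : a ∉ s) :
    interference F (insert a s) = interference (fun J ↦ F (insert a J)) s - interference F s := by
  simp only [interference, sum_powerset_insert ha, sub_eq_neg_add, ← sum_neg_distrib]
  congr 1 <;> refine sum_congr rfl fun J hJ ↦ ?_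
  · have haJ : a ∉ J := fun h ↦ ha (mem_powerset.1 hJ h)
    rw [insert_sdiff_of_notMem s haJ, card_insert_of_notMem (by simp [ha]), pow_succ, mul_neg_one,
      neg_smul]
  · rw [insert_sdiff_insert, sdiff_insert_of_notMem ha]

theorem interference_triple (F : Finset ι → N) {a b c : ι} (hab : a ≠ b) (hac : a ≠ c)
    (hbc : b ≠ c) :
    interference F {a, b, c} =
      F {a, b, c} - (F {a, b} + F {a, c} + F {b, c}) + (F {a} + F {b} + F {c}) - F ∅ := by
  have interference_singleton (G : Finset ι → N) : interference G {c} = G {c} - G ∅ := by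
    rw [← insert_empty_eq c, interference_insert G (notMem_empty c), interference_empty,
      interference_empty]
  rw [interference_insert F (by simp [hab, hac]), interference_insert _ (by simp [hbc]),
    interference_insert _ (by simp [hbc])]
  simp only [interference_singleton, insert_empty_eq]
  abel

theorem sum_Icc_neg_one_pow_card_sdiff_of_ssubset {t s : Finset ι} (hts : t ⊂ s) :
    ∑ J ∈ Icc t s, (-1 : ℤ) ^ #(s \ J) = 0 := by
  calc ∑ J ∈ Icc t s, (-1 : ℤ) ^ #(s \ J)
      = ∑ K ∈ (s \ t).powerset, (-1 : ℤ) ^ #K := by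
        refine sum_nbij' (s \ ·) (s \ ·) ?_ ?_ ?_ ?_ fun _ _ ↦ rfl
        · exact fun J hJ ↦ mem_powerset.2 (sdiff_subset_sdiff subset_rfl (mem_Icc.1 hJ).1)
        · intro K hK
          have disjoint_tK : Disjoint t K := disjoint_sdiff.mono_right (mem_powerset.1 hK)
          exact mem_Icc.2 ⟨subset_sdiff.2 ⟨hts.subset, disjoint_tK⟩, sdiff_subset⟩
        · exact fun J hJ ↦ Finset.sdiff_sdiff_eq_self (mem_Icc.1 hJ).2
        · exact fun K hK ↦ Finset.sdiff_sdiff_eq_self ((mem_powerset.1 hK).trans sdiff_subset)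
    _ = 0 := sum_powerset_neg_one_pow_card_of_nonempty (sdiff_nonempty.2 hts.not_subset)

theorem interference_biadditive_eq_sum (B : M →+ M' →+ N) (f : ι → M) (g : ι → M') (s : Finset ι) :
    interference (fun J ↦ B (∑ i ∈ J, f i) (∑ j ∈ J, g j)) s =
      ∑ p ∈ s ×ˢ s, (∑ J ∈ Icc {p.1, p.2} s, (-1 : ℤ) ^ #(s \ J)) • B (f p.1) (g p.2) := by
  have map_sum_sum (J : Finset ι) :
      B (∑ i ∈ J, f i) (∑ j ∈ J, g j) = ∑ p ∈ J ×ˢ J, B (f p.1) (g p.2) := by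
    simp only [map_sum, AddMonoidHom.finsetSum_apply, sum_product_right]
  have mem_comm (J : Finset ι) (p : ι × ι) :
      J ∈ s.powerset ∧ p ∈ J ×ˢ J ↔ J ∈ Icc {p.1, p.2} s ∧ p ∈ s ×ˢ s := by
    simp only [mem_powerset, mem_product, mem_Icc, insert_subset_iff, singleton_subset_iff]
    grind
  simp only [interference, map_sum_sum, smul_sum, sum_smul]
  exact sum_comm' mem_comm

theorem interference_biadditive_eq_zero (B : M →+ M' →+ N) (f : ι → M) (g : ι → M')
    {s : Finset ι} (hs : 2 < #s) :
    interference (fun J ↦ B (∑ i ∈ J, f i) (∑ j ∈ J, g j)) s = 0 := by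
  rw [interference_biadditive_eq_sum]
  refine sum_eq_zero fun p hp ↦ ?_
  have pair_ssubset : {p.1, p.2} ⊂ s := by
    obtain ⟨h₁, h₂⟩ := mem_product.1 hp
    refine ⟨insert_subset h₁ (singleton_subset_iff.2 h₂), fun hsub ↦ ?_⟩
    exact (card_le_two.trans_lt hs).not_ge (card_le_card hsub)
  rw [sum_Icc_neg_one_pow_card_sdiff_of_ssubset pair_ssubset, zero_smul]

theorem three_slit_quantum_I3_zero_general {m R : Type*} [Fintype m] [NonUnitalNonAssocRing R]
    (P : ι → Matrix m m R) (ρ D : Matrix m m R) {s : Finset ι} (hs : 2 < #s) :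
    interference (fun J ↦ (D * ((∑ i ∈ J, P i) * ρ * ∑ i ∈ J, P i)).trace) s = 0 :=
  let detect : Matrix m m R →+ R :=
    (Matrix.traceAddMonoidHom m R).comp (AddMonoidHom.mulLeft D)
  interference_biadditive_eq_zero
    ((AddMonoidHom.compHom detect).comp (AddMonoidHom.mul.comp (AddMonoidHom.mulRight ρ))) P P hs

end Interference

/-- Quantum theory exhibits no third-order interference: for three pairwise
orthogonal Hermitian projections `P i` on `ℂ^n`, with multi-slit filters
`P_J := ∑ i in J, P i`, every positive semidefinite preparation `ρ` and every
effect `D` (Hermitian with `0 ≤ D ≤ I`) satisfy Sorkin's identity `I₃ = 0`. -/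
theorem three_slit_quantum_I3_zero {n : ℕ}
    (P : Fin 3 → Matrix (Fin n) (Fin n) ℂ)
    (hproj : ∀ i, P i * P i = P i)
    (hherm : ∀ i, (P i).IsHermitian)
    (horth : ∀ i j, i ≠ j → P i * P j = 0)
    (PJ : Finset (Fin 3) → Matrix (Fin n) (Fin n) ℂ)
    (hPJ : ∀ J : Finset (Fin 3), J.Nonempty → PJ J = ∑ i ∈ J, P i)
    (ρ : Matrix (Fin n) (Fin n) ℂ) (hρ : ρ.PosSemidef)
    (D : Matrix (Fin n) (Fin n) ℂ) (hD : D.IsHermitian)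
    (hD0 : D.PosSemidef) (hD1 : (1 - D).PosSemidef) :
    (D * (PJ {0, 1, 2} * ρ * PJ {0, 1, 2})).trace
      - ((D * (PJ {0, 1} * ρ * PJ {0, 1})).trace
          + (D * (PJ {0, 2} * ρ * PJ {0, 2})).trace
          + (D * (PJ {1, 2} * ρ * PJ {1, 2})).trace)
      + ((D * (PJ {0} * ρ * PJ {0})).trace
          + (D * (PJ {1} * ρ * PJ {1})).trace
          + (D * (PJ {2} * ρ * PJ {2})).trace) = 0 := by
  simpa [interference_triple, hPJ] using
    three_slit_quantum_I3_zero_general P ρ D (s := {0, 1, 2}) (by decide)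
end

section
/- P^(3) is idempotent: P^(3) ∘ P^(3) = P^(3). -/
/-!
By inclusion–exclusion, commuting idempotents `p`, `q`, `r` have the join
`p + q + r - p * q - p * r - q * r + p * q * r`, an idempotent. It absorbs `p * q * r`, so removing
that last term leaves an idempotent. For `p = P₁₂`, `q = P₁₃`, `r = P₂₃` the pairwise products are
`P₁`, `P₂`, `P₃`, and what is left is `P⁽³⁾`.
-/

section NonUnitalRing

variable {R : Type*} [NonUnitalRing R] {p q r : R}

theorem add_sub_mul_mul_self_eq_right (hq : IsIdempotentElem q) :
    (p + q - p * q) * q = q := by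
  rw [sub_mul, add_mul, hq.mul_mul_self, hq.eq, add_sub_cancel_left]

theorem self_mul_add_sub_mul_eq_right_of_commute (hpq : Commute p q) (hq : IsIdempotentElem q) :
    q * (p + q - p * q) = q := by
  have join_comm : Commute (p + q - p * q) q :=
    (hpq.add_left (.refl q)).sub_left (hpq.mul_left (.refl q))
  rw [← join_comm.eq, add_sub_mul_mul_self_eq_right hq]

theorem isIdempotentElem_add_add_sub_mul_sub_mul_sub_mul_of_commute
    (hp : IsIdempotentElem p) (hq : IsIdempotentElem q) (hr : IsIdempotentElem r)
    (hpq : Commute p q) (hpr : Commute p r) (hqr : Commute q r) :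
    IsIdempotentElem (p + q + r - p * q - p * r - q * r) := by
  let join_pq := p + q - p * q
  let join := join_pq + r - join_pq * r
  let meet := p * q * r
  have pq_comm_r : Commute (p * q) r := hpr.mul_left hqr
  have join_pq_comm_r : Commute join_pq r := (hpr.add_left hqr).sub_left pq_comm_r
  have join_idem : IsIdempotentElem join :=
    (hp.add_sub_mul_of_commute hpq hq).add_sub_mul_of_commute join_pq_comm_r hr
  have meet_idem : IsIdempotentElem meet := (hp.mul_of_commute hpq hq).mul_of_commute pq_comm_r hr
  have meet_mul_join : meet * join = meet := by
    rw [mul_assoc, self_mul_add_sub_mul_eq_right_of_commute join_pq_comm_r hr]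
  have join_mul_meet : join * meet = meet := by
    simp only [meet, pq_comm_r.eq]
    rw [← mul_assoc, add_sub_mul_mul_self_eq_right hr]
  have join_sub_meet : join - meet = p + q + r - p * q - p * r - q * r := by
    simp only [join, meet, join_pq, sub_mul, add_mul]
    abel
  exact join_sub_meet ▸ meet_idem.sub join_idem meet_mul_join join_mul_meet

theorem P3_idempotent_general (P : Finset (Fin 3) → R)
    (hmul : ∀ J K : Finset (Fin 3), P J * P K = P (J ∩ K)) :
    IsIdempotentElem (P {0, 1} + P {0, 2} + P {1, 2} - P {0} - P {1} - P {2}) := by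
  have idem (J) : IsIdempotentElem (P J) := by rw [IsIdempotentElem, hmul, Finset.inter_self]
  have comm (J K) : Commute (P J) (P K) := by
    rw [commute_iff_eq, hmul, hmul, Finset.inter_comm]
  have mul_eq_P0 : P {0, 1} * P {0, 2} = P {0} := hmul _ _
  have mul_eq_P1 : P {0, 1} * P {1, 2} = P {1} := hmul _ _
  have mul_eq_P2 : P {0, 2} * P {1, 2} = P {2} := hmul _ _
  rw [← mul_eq_P0, ← mul_eq_P1, ← mul_eq_P2]
  exact isIdempotentElem_add_add_sub_mul_sub_mul_sub_mul_of_commute (idem _) (idem _) (idem _)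
    (comm _ _) (comm _ _) (comm _ _)

end NonUnitalRing

/-- `P⁽³⁾ := P₁₂ + P₁₃ + P₂₃ − P₁ − P₂ − P₃` is idempotent. -/
theorem P3_idempotent {V : Type*} [AddCommGroup V] [Module ℝ V]
    (P : Finset (Fin 3) → V →ₗ[ℝ] V)
    (hP0 : P ∅ = 0)
    (hmul : ∀ J K : Finset (Fin 3), P J ∘ₗ P K = P (J ∩ K)) :
    (P {0, 1} + P {0, 2} + P {1, 2} - P {0} - P {1} - P {2}) ∘ₗ
      (P {0, 1} + P {0, 2} + P {1, 2} - P {0} - P {1} - P {2}) =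
    P {0, 1} + P {0, 2} + P {1, 2} - P {0} - P {1} - P {2} := by
  exact (P3_idempotent_general (R := Module.End ℝ V) P hmul).eq
end

section
/- The range of P^(3) equals the linear span of the union of the ranges of the three two-slit filters; as submodules of V: range(P^(3)) = range(P_{12}) ⊔ range(P_{13}) ⊔ range(P_{23}) (the supremum, i.e. the span of the union, of the three ranges). -/
/-!
For commuting idempotents `e` and `f`, the idempotent `e + f - e * f` is their join: it projects
onto `range e ⊔ range f`. Joining three commuting idempotents in this way and expanding gives the
inclusion–exclusion sum, and `P⁽³⁾` is that sum for `P₁₂`, `P₁₃`, `P₂₃`, whose pairwise products are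
`P₁`, `P₂`, `P₃` and whose triple product `P_∅` vanishes.
-/

section CommutingIdempotents

variable {R V : Type*} [Semiring R] [AddCommGroup V] [Module R V] {e f g : Module.End R V}

theorem range_add_sub_mul_of_commute (hef : Commute e f) (he : IsIdempotentElem e)
    (hf : IsIdempotentElem f) :
    LinearMap.range (e + f - e * f) = LinearMap.range e ⊔ LinearMap.range f := by
  have join_mul_left : (e + f - e * f) * e = e := by
    rw [sub_mul, add_mul, he.eq, hef.eq, mul_assoc, he.eq, add_sub_cancel_right]
  have join_mul_right : (e + f - e * f) * f = f := by
    rw [sub_mul, add_mul, hf.eq, mul_assoc, hf.eq, add_sub_cancel_left]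
  apply le_antisymm
  · rw [show e + f - e * f = e * (1 - f) + f by noncomm_ring]
    exact (LinearMap.range_add_le _ _).trans
      (sup_le_sup_right (LinearMap.range_comp_le_range (1 - f) e) _)
  · refine sup_le ?_ ?_
    · simpa only [← Module.End.mul_eq_comp, join_mul_left] using
        LinearMap.range_comp_le_range e (e + f - e * f)
    · simpa only [← Module.End.mul_eq_comp, join_mul_right] using
        LinearMap.range_comp_le_range f (e + f - e * f)

theorem range_inclusion_exclusion_of_commute (hef : Commute e f) (heg : Commute e g)
    (hfg : Commute f g) (he : IsIdempotentElem e) (hf : IsIdempotentElem f)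
    (hg : IsIdempotentElem g) :
    LinearMap.range (e + f + g - e * f - e * g - f * g + e * f * g) =
      LinearMap.range e ⊔ LinearMap.range f ⊔ LinearMap.range g := by
  have join_commute : Commute (e + f - e * f) g :=
    (heg.add_left hfg).sub_left (heg.mul_left hfg)
  have join_idempotent : IsIdempotentElem (e + f - e * f) := he.add_sub_mul_of_commute hef hf
  have expand : e + f + g - e * f - e * g - f * g + e * f * g =
      (e + f - e * f) + g - (e + f - e * f) * g := by
    noncomm_ring
  rw [expand, range_add_sub_mul_of_commute join_commute join_idempotent hg,
    range_add_sub_mul_of_commute hef he hf]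

end CommutingIdempotents

theorem range_P3_eq_sup_ranges_general {R V α : Type*} [Semiring R] [AddCommGroup V] [Module R V]
    [SemilatticeInf α] (P : α → V →ₗ[R] V) (hmul : ∀ a b, P a ∘ₗ P b = P (a ⊓ b)) (a b c : α) :
    LinearMap.range
        (P a + P b + P c - P (a ⊓ b) - P (a ⊓ c) - P (b ⊓ c) + P (a ⊓ b ⊓ c)) =
      LinearMap.range (P a) ⊔ LinearMap.range (P b) ⊔ LinearMap.range (P c) := by
  have commute (x y : α) : Commute (P x) (P y) :=
    (hmul x y).trans (inf_comm x y ▸ (hmul y x).symm)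
  have idempotent (x : α) : IsIdempotentElem (P x) := (hmul x x).trans (by rw [inf_idem])
  simpa only [Module.End.mul_eq_comp, hmul] using
    range_inclusion_exclusion_of_commute (commute a b) (commute a c) (commute b c)
      (idempotent a) (idempotent b) (idempotent c)

/-- The range of `P⁽³⁾` equals the span of the union of the ranges of the
three two-slit filters. -/
theorem range_P3_eq_sup_ranges {V : Type*} [AddCommGroup V] [Module ℝ V]
    (P : Finset (Fin 3) → V →ₗ[ℝ] V)
    (hP0 : P ∅ = 0)
    (hmul : ∀ J K : Finset (Fin 3), P J ∘ₗ P K = P (J ∩ K)) :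
    LinearMap.range (P {0, 1} + P {0, 2} + P {1, 2} - P {0} - P {1} - P {2}) =
      LinearMap.range (P {0, 1}) ⊔ LinearMap.range (P {0, 2}) ⊔
        LinearMap.range (P {1, 2}) := by
  simpa [hP0] using range_P3_eq_sup_ranges_general P hmul {0, 1} {0, 2} {1, 2}
end

section
/- R_{123} ∘ P^(3) = P^(3) ∘ R_{123} = 0. -/
/-! For commuting idempotents `a`, `b`, `c` the join `s = a + b + c - ab - ac - bc + abc` is
idempotent and absorbs `abc`, so `s - abc` is idempotent as well. With `a = P₁₂`, `b = P₁₃`,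
`c = P₂₃` this says that `P⁽³⁾` is idempotent; `P₁₂₃` acts on it as the identity, and so
`(P₁₂₃ - P⁽³⁾) P⁽³⁾ = P⁽³⁾ - P⁽³⁾ = 0`. -/

section NonUnitalRing

variable {A : Type*} [NonUnitalRing A] {a b c p : A}

theorem mul_add_sub_mul_eq_of_mul_eq (h : p * a = p) (b : A) : p * (a + b - a * b) = p := by
  rw [mul_sub, mul_add, ← mul_assoc, h, add_sub_cancel_right]

theorem add_sub_mul_mul_eq_of_mul_eq (h : b * p = p) (a : A) : (a + b - a * b) * p = p := by
  rw [sub_mul, add_mul, mul_assoc, h, add_sub_cancel_left]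

theorem isIdempotentElem_add_add_sub_mul_sub_mul_sub_mul (ha : IsIdempotentElem a)
    (hb : IsIdempotentElem b) (hc : IsIdempotentElem c) (hab : Commute a b) (hac : Commute a c)
    (hbc : Commute b c) : IsIdempotentElem (a + b + c - a * b - a * c - b * c) := by
  let join := (a + b - a * b) + c - (a + b - a * b) * c
  have habc : Commute (a * b) c := hac.mul_left hbc
  have hjoin : IsIdempotentElem join :=
    .add_sub_mul_of_commute ((hac.add_left hbc).sub_left habc)
      (.add_sub_mul_of_commute hab ha hb) hc
  have hmeet : IsIdempotentElem (a * b * c) := .mul_of_commute habc (.mul_of_commute hab ha hb) hc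
  have meet_mul_a : a * b * c * a = a * b * c := by
    rw [mul_assoc a b c, (hab.mul_right hac).eq, ha.mul_mul_self]
  have c_mul_meet : c * (a * b * c) = a * b * c := by
    rw [← mul_assoc, habc.symm.eq, hc.mul_mul_self]
  have meet_mul_join : a * b * c * join = a * b * c :=
    mul_add_sub_mul_eq_of_mul_eq (mul_add_sub_mul_eq_of_mul_eq meet_mul_a b) c
  have join_mul_meet : join * (a * b * c) = a * b * c :=
    add_sub_mul_mul_eq_of_mul_eq c_mul_meet _
  have join_sub_meet : join - a * b * c = a + b + c - a * b - a * c - b * c := by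
    simp only [join, add_mul, sub_mul]
    abel
  exact join_sub_meet ▸ hmeet.sub hjoin meet_mul_join join_mul_meet

end NonUnitalRing

theorem R123_comp_P3_eq_zero_general {A L : Type*} [NonUnitalRing A] [SemilatticeInf L]
    (P : L → A) (hmul : ∀ x y : L, P x * P y = P (x ⊓ y))
    {x y z t : L} (hx : x ≤ t) (hy : y ≤ t) (hz : z ≤ t) :
    (P t - (P x + P y + P z - P (x ⊓ y) - P (x ⊓ z) - P (y ⊓ z))) *
      (P x + P y + P z - P (x ⊓ y) - P (x ⊓ z) - P (y ⊓ z)) = 0 ∧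
    (P x + P y + P z - P (x ⊓ y) - P (x ⊓ z) - P (y ⊓ z)) *
      (P t - (P x + P y + P z - P (x ⊓ y) - P (x ⊓ z) - P (y ⊓ z))) = 0 := by
  have idem (u : L) : IsIdempotentElem (P u) := by rw [IsIdempotentElem, hmul, inf_idem]
  have comm (u v : L) : Commute (P u) (P v) := by rw [commute_iff_eq, hmul, hmul, inf_comm]
  have t_mul {u : L} (hu : u ≤ t) : P t * P u = P u := by rw [hmul, inf_eq_right.2 hu]
  have mul_t {u : L} (hu : u ≤ t) : P u * P t = P u := by rw [hmul, inf_eq_left.2 hu]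
  set q := P x + P y + P z - P (x ⊓ y) - P (x ⊓ z) - P (y ⊓ z) with hq
  have q_idem : IsIdempotentElem q := by
    simpa only [hmul, hq] using isIdempotentElem_add_add_sub_mul_sub_mul_sub_mul (idem x) (idem y)
      (idem z) (comm x y) (comm x z) (comm y z)
  have t_mul_q : P t * q = q := by
    simp only [hq, mul_sub, mul_add, t_mul, hx, hy, hz, inf_le_of_left_le]
  have q_mul_t : q * P t = q := by
    simp only [hq, sub_mul, add_mul, mul_t, hx, hy, hz, inf_le_of_left_le]
  constructor
  · rw [sub_mul, t_mul_q, q_idem.eq, sub_self]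
  · rw [mul_sub, q_mul_t, q_idem.eq, sub_self]

/-- `R₁₂₃ ∘ P⁽³⁾ = P⁽³⁾ ∘ R₁₂₃ = 0`. -/
theorem R123_comp_P3_eq_zero {V : Type*} [AddCommGroup V] [Module ℝ V]
    (P : Finset (Fin 3) → V →ₗ[ℝ] V)
    (hP0 : P ∅ = 0)
    (hmul : ∀ J K : Finset (Fin 3), P J ∘ₗ P K = P (J ∩ K)) :
    (P {0, 1, 2} - (P {0, 1} + P {0, 2} + P {1, 2} - P {0} - P {1} - P {2})) ∘ₗ
      (P {0, 1} + P {0, 2} + P {1, 2} - P {0} - P {1} - P {2}) = 0 ∧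
    (P {0, 1} + P {0, 2} + P {1, 2} - P {0} - P {1} - P {2}) ∘ₗ
      (P {0, 1, 2} - (P {0, 1} + P {0, 2} + P {1, 2} - P {0} - P {1} - P {2})) = 0 :=
  R123_comp_P3_eq_zero_general (A := Module.End ℝ V) P hmul
    (x := {0, 1}) (y := {0, 2}) (z := {1, 2}) (by decide) (by decide) (by decide)
end

section
/- The range of P_{123} is the internal direct sum of the ranges of R_{123} and P^(3): range(P_{123}) = range(R_{123}) ⊔ range(P^(3)) as submodules of V, and range(R_{123}) ⊓ range(P^(3)) = {0}. -/
/-!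
For a family `P` of elements indexed by finite sets with `P J * P K = P (J ∩ K)`, consider the
Möbius sum `R T = ∑_{J ⊆ T} (-1)^|T \ J| P J`. If `K` misses some `i ∈ T`, then the terms of
`R T * P K` for `J` and `J ∪ {i}` cancel, so `R T * P K = 0`, while `R T * P K = R T` for `K ⊇ T`.
Hence only the term `J = T` survives in `R T * R T = ∑_J ± R T * P J`, so `R T` is an idempotent
lying below `P T`, and it splits the range of `P T`. For `T = {1, 2, 3}` and `P ∅ = 0`, `R T` is
`R₁₂₃` and `P T - R T` is `P⁽³⁾`.
-/

open Finset

section Idempotent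

variable {k V : Type*} [Ring k] [AddCommGroup V] [Module k V] {p q : Module.End k V}

theorem range_eq_range_sup_range_sub (hpq : p * q = q) :
    LinearMap.range p = LinearMap.range q ⊔ LinearMap.range (p - q) := by
  have range_q_le : LinearMap.range q ≤ LinearMap.range p := by
    rw [← hpq]
    exact LinearMap.range_comp_le_range q p
  refine le_antisymm ?_ (sup_le range_q_le ?_)
  · rintro _ ⟨x, rfl⟩
    exact Submodule.mem_sup.2 ⟨q x, ⟨x, rfl⟩, (p - q) x, ⟨x, rfl⟩, by simp⟩
  · rintro _ ⟨x, rfl⟩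
    exact sub_mem (LinearMap.mem_range_self p x) (range_q_le (LinearMap.mem_range_self q x))

theorem disjoint_range_range_sub (hq : IsIdempotentElem q) (hqp : q * p = q) :
    Disjoint (LinearMap.range q) (LinearMap.range (p - q)) := by
  have mul_sub_eq_zero : q * (p - q) = 0 := by rw [mul_sub, hqp, hq.eq, sub_self]
  exact (LinearMap.IsIdempotentElem.isCompl hq).disjoint.mono_right
    (LinearMap.range_le_ker_iff.2 mul_sub_eq_zero)

end Idempotent

section MobiusResidual

variable {ι : Type*} [DecidableEq ι]

/-- The Möbius sum `∑_{J ⊆ T} (-1)^|T \ J| P J`: the part of `P T` not accounted for by the `P J`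
with `J` a proper subset of `T`. For `T = {1, 2, 3}` and `P ∅ = 0` it is the operator
`R₁₂₃`. -/
def mobiusResidual {A : Type*} [AddCommGroup A] (P : Finset ι → A) (T : Finset ι) : A :=
  ∑ J ∈ T.powerset, (-1 : ℤ) ^ #(T \ J) • P J

theorem mobiusResidual_empty {A : Type*} [AddCommGroup A] (P : Finset ι → A) :
    mobiusResidual P ∅ = P ∅ := by
  simp [mobiusResidual]

theorem mobiusResidual_insert {A : Type*} [AddCommGroup A] (P : Finset ι → A) {i : ι}
    {S : Finset ι} (hiS : i ∉ S) :
    mobiusResidual P (insert i S) =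
      mobiusResidual (fun J => P (insert i J)) S - mobiusResidual P S := by
  have sum_without_i : ∑ J ∈ S.powerset, (-1 : ℤ) ^ #(insert i S \ J) • P J =
      -mobiusResidual P S := by
    rw [mobiusResidual, ← sum_neg_distrib]
    refine sum_congr rfl fun J hJ => ?_
    have hiJ : i ∉ J := fun hi => hiS (mem_powerset.1 hJ hi)
    rw [insert_sdiff_of_notMem _ hiJ, card_insert_of_notMem fun hi => hiS (mem_sdiff.1 hi).1,
      pow_succ, mul_neg_one, neg_smul]
  have sum_with_i : ∑ J ∈ S.powerset, (-1 : ℤ) ^ #(insert i S \ insert i J) • P (insert i J) =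
      mobiusResidual (fun J => P (insert i J)) S := by
    simp only [mobiusResidual, insert_sdiff_insert, sdiff_insert_of_notMem hiS]
  rw [mobiusResidual, sum_powerset_insert hiS, sum_without_i, sum_with_i, neg_add_eq_sub]

theorem mobiusResidual_triple {A : Type*} [AddCommGroup A] {P : Finset ι → A} (hP0 : P ∅ = 0)
    {a b c : ι} (hab : a ≠ b) (hac : a ≠ c) (hbc : b ≠ c) :
    mobiusResidual P {a, b, c} =
      P {a, b, c} - (P {a, b} + P {a, c} + P {b, c} - P {a} - P {b} - P {c}) := by
  have ha : a ∉ ({b, c} : Finset ι) := by simp [hab, hac]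
  have hb : b ∉ ({c} : Finset ι) := by simp [hbc]
  have residual_singleton (Q : Finset ι → A) : mobiusResidual Q {c} = Q {c} - Q ∅ := by
    simpa only [mobiusResidual_empty, insert_empty_eq]
      using mobiusResidual_insert Q (notMem_empty c)
  simp only [mobiusResidual_insert _ ha, mobiusResidual_insert _ hb, residual_singleton,
    insert_empty_eq, hP0]
  abel

variable {A : Type*} [NonUnitalRing A] {P : Finset ι → A} {T K : Finset ι}

theorem mobiusResidual_mul (hmul : ∀ J K, P J * P K = P (J ∩ K)) :
    mobiusResidual P T * P K = mobiusResidual (fun J => P (J ∩ K)) T := by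
  simp only [mobiusResidual, sum_mul, smul_mul_assoc, hmul]

theorem commute_mobiusResidual (hmul : ∀ J K, P J * P K = P (J ∩ K)) :
    Commute (mobiusResidual P T) (P K) := by
  refine Commute.sum_left _ _ _ fun J _ => Commute.smul_left ?_ _
  rw [commute_iff_eq, hmul, hmul, inter_comm]

theorem mobiusResidual_mul_of_subset (hmul : ∀ J K, P J * P K = P (J ∩ K)) (hTK : T ⊆ K) :
    mobiusResidual P T * P K = mobiusResidual P T := by
  rw [mobiusResidual_mul hmul]
  refine sum_congr rfl fun J hJ => ?_
  simp only [inter_eq_left.2 ((mem_powerset.1 hJ).trans hTK)]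

theorem mobiusResidual_mul_of_not_subset (hmul : ∀ J K, P J * P K = P (J ∩ K)) (hTK : ¬T ⊆ K) :
    mobiusResidual P T * P K = 0 := by
  obtain ⟨i, hiT, hiK⟩ := not_subset.1 hTK
  obtain ⟨S, hiS, rfl⟩ : ∃ S, i ∉ S ∧ insert i S = T :=
    ⟨T.erase i, notMem_erase i T, insert_erase hiT⟩
  rw [mobiusResidual_mul hmul, mobiusResidual_insert _ hiS]
  simp only [insert_inter_of_notMem hiK, sub_self]

theorem isIdempotentElem_mobiusResidual (hmul : ∀ J K, P J * P K = P (J ∩ K)) :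
    IsIdempotentElem (mobiusResidual P T) := by
  calc mobiusResidual P T * mobiusResidual P T
      = ∑ J ∈ T.powerset, (-1 : ℤ) ^ #(T \ J) • (mobiusResidual P T * P J) := by
        simp only [← mul_smul_comm, ← mul_sum]
        rfl
    _ = (-1 : ℤ) ^ #(T \ T) • (mobiusResidual P T * P T) := by
        refine sum_eq_single_of_mem T (mem_powerset_self T) fun J hJ hne => ?_
        have hTJ : ¬T ⊆ J := fun h => hne ((mem_powerset.1 hJ).antisymm h)
        rw [mobiusResidual_mul_of_not_subset hmul hTJ, smul_zero]
    _ = mobiusResidual P T := by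
        rw [Finset.sdiff_self, card_empty, pow_zero, one_smul,
          mobiusResidual_mul_of_subset hmul Subset.rfl]

end MobiusResidual

theorem range_P123_directSum_general {ι k V : Type*} [DecidableEq ι] [Ring k] [AddCommGroup V]
    [Module k V] {P : Finset ι → V →ₗ[k] V} (hmul : ∀ J K, P J ∘ₗ P K = P (J ∩ K))
    (T : Finset ι) :
    LinearMap.range (P T) =
      LinearMap.range (mobiusResidual P T) ⊔ LinearMap.range (P T - mobiusResidual P T) ∧
    LinearMap.range (mobiusResidual P T) ⊓ LinearMap.range (P T - mobiusResidual P T) = ⊥ := by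
  have residual_mul : (mobiusResidual P T : Module.End k V) * P T = mobiusResidual P T :=
    mobiusResidual_mul_of_subset (A := Module.End k V) hmul Subset.rfl
  have mul_residual : P T * (mobiusResidual P T : Module.End k V) = mobiusResidual P T :=
    (commute_mobiusResidual (A := Module.End k V) hmul).eq.symm.trans residual_mul
  exact ⟨range_eq_range_sup_range_sub mul_residual,
    (disjoint_range_range_sub (isIdempotentElem_mobiusResidual (A := Module.End k V) hmul)
      residual_mul).eq_bot⟩

/-- The range of `P₁₂₃` is the internal direct sum of the ranges of
`R₁₂₃ := P₁₂₃ − P⁽³⁾` and `P⁽³⁾`. -/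
theorem range_P123_directSum {V : Type*} [AddCommGroup V] [Module ℝ V]
    (P : Finset (Fin 3) → V →ₗ[ℝ] V)
    (hP0 : P ∅ = 0)
    (hmul : ∀ J K : Finset (Fin 3), P J ∘ₗ P K = P (J ∩ K)) :
    LinearMap.range (P {0, 1, 2}) =
      LinearMap.range
          (P {0, 1, 2} - (P {0, 1} + P {0, 2} + P {1, 2} - P {0} - P {1} - P {2})) ⊔
        LinearMap.range (P {0, 1} + P {0, 2} + P {1, 2} - P {0} - P {1} - P {2}) ∧
    LinearMap.range
          (P {0, 1, 2} - (P {0, 1} + P {0, 2} + P {1, 2} - P {0} - P {1} - P {2})) ⊓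
        LinearMap.range (P {0, 1} + P {0, 2} + P {1, 2} - P {0} - P {1} - P {2}) = ⊥ := by
  simpa only [mobiusResidual_triple hP0 (show (0 : Fin 3) ≠ 1 by decide)
    (show (0 : Fin 3) ≠ 2 by decide) (show (1 : Fin 3) ≠ 2 by decide), sub_sub_cancel]
    using range_P123_directSum_general hmul {0, 1, 2}
end

section
/- The kernel of P_{123} equals the intersection of the kernels of R_{123} and P^(3): ker(P_{123}) = ker(R_{123}) ⊓ ker(P^(3)). -/
open LinearMap (ker)
open Submodule (span subset_span)

section Kernels

variable {R M N : Type*} [AddCommMonoid M]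

theorem le_ker_of_mem_span [CommSemiring R] [AddCommMonoid N] [Module R M] [Module R N]
    {p : Submodule R M} {s : Set (M →ₗ[R] N)} (hs : ∀ f ∈ s, p ≤ ker f)
    {g : M →ₗ[R] N} (hg : g ∈ span R s) : p ≤ ker g := by
  intro v hv
  have span_le_ker_eval : span R s ≤ ker (LinearMap.applyₗ (R := R) (M₂ := N) v) :=
    Submodule.span_le.2 fun f hf => hs f hf hv
  exact span_le_ker_eval hg

theorem ker_eq_ker_sub_inf_ker_of_le [Semiring R] [AddCommGroup N] [Module R M] [Module R N]
    {f g : M →ₗ[R] N} (h : ker f ≤ ker g) : ker f = ker (f - g) ⊓ ker g := by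
  ext v
  have sub_apply_eq (hg : g v = 0) : (f - g) v = f v := by rw [LinearMap.sub_apply, hg, sub_zero]
  constructor
  · intro hf
    exact ⟨(sub_apply_eq (h hf)).trans hf, h hf⟩
  · rintro ⟨hfg, hg⟩
    exact (sub_apply_eq hg).symm.trans hfg

end Kernels

section InfMultiplicative

variable {R M α : Type*} [SemilatticeInf α]

theorem antitone_ker_of_comp_eq_inf [Semiring R] [AddCommMonoid M] [Module R M]
    {P : α → M →ₗ[R] M} (hP : ∀ a b, P a ∘ₗ P b = P (a ⊓ b)) :
    Antitone fun a => ker (P a) := by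
  intro a b hab
  have comp_eq : P a ∘ₗ P b = P a := by rw [hP, inf_eq_left.2 hab]
  calc ker (P b) ≤ ker (P a ∘ₗ P b) := LinearMap.ker_le_ker_comp _ _
    _ = ker (P a) := by rw [comp_eq]

theorem ker_P123_eq_inf_kers_general [CommSemiring R] [AddCommGroup M] [Module R M]
    {P : α → M →ₗ[R] M} (hP : ∀ a b, P a ∘ₗ P b = P (a ⊓ b)) {a : α} {Q : M →ₗ[R] M}
    (hQ : Q ∈ span R (P '' Set.Iic a)) : ker (P a) = ker (P a - Q) ⊓ ker Q :=
  ker_eq_ker_sub_inf_ker_of_le <| le_ker_of_mem_span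
    (Set.forall_mem_image.2 fun _ hb => antitone_ker_of_comp_eq_inf hP hb) hQ

end InfMultiplicative

/-- `ker P₁₂₃ = ker R₁₂₃ ⊓ ker P⁽³⁾`, where `R₁₂₃ := P₁₂₃ − P⁽³⁾`. -/
theorem ker_P123_eq_inf_kers {V : Type*} [AddCommGroup V] [Module ℝ V]
    (P : Finset (Fin 3) → V →ₗ[ℝ] V)
    (hP0 : P ∅ = 0)
    (hmul : ∀ J K : Finset (Fin 3), P J ∘ₗ P K = P (J ∩ K)) :
    LinearMap.ker (P {0, 1, 2}) =
      LinearMap.ker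
          (P {0, 1, 2} - (P {0, 1} + P {0, 2} + P {1, 2} - P {0} - P {1} - P {2})) ⊓
        LinearMap.ker (P {0, 1} + P {0, 2} + P {1, 2} - P {0} - P {1} - P {2}) := by
  have mem (J : Finset (Fin 3)) : P J ∈ span ℝ (P '' Set.Iic {0, 1, 2}) :=
    subset_span ⟨J, J.subset_univ.trans (by decide), rfl⟩
  exact ker_P123_eq_inf_kers_general hmul <| sub_mem (sub_mem (sub_mem
    (add_mem (add_mem (mem _) (mem _)) (mem _)) (mem _)) (mem _)) (mem _)
end

section
/- P_{123} = P^(3) if and only if range(P_{123}) = range(P_{12}) ⊔ range(P_{13}) ⊔ range(P_{23}) (the span of the union of the ranges of the three two-slit filters). -/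
/-!
The join `f + g - f * g` of two commuting projections is the projection onto the sum of their
ranges. Joining the three two-slit filters in this way gives the inclusion–exclusion expression
`P⁽³⁾`, since their products are the one-slit filters and `P ∅ = 0`. So `P⁽³⁾` is the projection
onto the span of the three ranges, and commuting projections are equal once their ranges are.
-/

open LinearMap

section CommutingProjections

variable {R V : Type*} [Semiring R] [AddCommMonoid V] [Module R V]
  {m : Submodule R V} {f g : Module.End R V}

theorem eq_of_isProj_of_commute (hf : IsProj m f) (hg : IsProj m g) (hfg : Commute f g) :
    f = g := by
  ext x
  calc f x = g (f x) := (hg.map_id _ (hf.map_mem x)).symm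
    _ = f (g x) := (LinearMap.congr_fun hfg.eq x).symm
    _ = g x := hf.map_id _ (hg.map_mem x)

theorem eq_iff_range_eq_of_commute (hf : IsIdempotentElem f) (hg : IsProj m g)
    (hfg : Commute f g) : f = g ↔ range f = m where
  mp h := h ▸ hg.range
  mpr h := eq_of_isProj_of_commute (h ▸ IsIdempotentElem.isProj_range f hf) hg hfg

end CommutingProjections

theorem isProj_sup_of_commute {R V : Type*} [Semiring R] [AddCommGroup V] [Module R V]
    {m n : Submodule R V} {f g : Module.End R V} (hf : IsProj m f) (hg : IsProj n g)
    (hfg : Commute f g) : IsProj (m ⊔ n) (f + g - f * g) := by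
  have apply_eq (x : V) : (f + g - f * g) x = f (x - g x) + g x := by
    simp only [LinearMap.sub_apply, LinearMap.add_apply, Module.End.mul_apply, map_sub]
    abel
  have fixes_left : ∀ x ∈ m, (f + g - f * g) x = x := fun x hx ↦ by
    have hgx : f (g x) = g x := by
      rw [← Module.End.mul_apply, hfg.eq, Module.End.mul_apply, hf.map_id x hx]
    rw [apply_eq, map_sub, hgx, hf.map_id x hx, sub_add_cancel]
  have fixes_right : ∀ x ∈ n, (f + g - f * g) x = x := fun x hx ↦ by
    rw [apply_eq, hg.map_id x hx, sub_self, map_zero, zero_add]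
  refine ⟨fun x ↦ ?_, fun x hx ↦ ?_⟩
  · rw [apply_eq]
    exact Submodule.add_mem_sup (hf.map_mem _) (hg.map_mem _)
  · obtain ⟨y, hy, z, hz, rfl⟩ := Submodule.mem_sup.1 hx
    rw [map_add, fixes_left y hy, fixes_right z hz]

section ProjectionFamily

variable {R V α : Type*} [Semiring R] [AddCommMonoid V] [Module R V] [SemilatticeInf α]
  {P : α → V →ₗ[R] V}

theorem isProj_range_of_comp_eq_inf (hmul : ∀ a b, P a ∘ₗ P b = P (a ⊓ b)) (a : α) :
    IsProj (range (P a)) (P a) :=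
  IsIdempotentElem.isProj_range _ ((hmul a a).trans (by rw [inf_idem]))

theorem commute_of_comp_eq_inf (hmul : ∀ a b, P a ∘ₗ P b = P (a ⊓ b)) (a b : α) :
    Commute (P a) (P b) :=
  (hmul a b).trans (by rw [inf_comm, ← hmul b a, Module.End.mul_eq_comp])

end ProjectionFamily

section InclusionExclusion

variable {R V α : Type*} [Semiring R] [AddCommGroup V] [Module R V] [SemilatticeInf α]
  {P : α → V →ₗ[R] V}

theorem isProj_range_sup_range (hmul : ∀ a b, P a ∘ₗ P b = P (a ⊓ b)) (a b : α) :
    IsProj (range (P a) ⊔ range (P b)) (P a + P b - P (a ⊓ b)) := by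
  rw [← hmul a b]
  exact isProj_sup_of_commute (isProj_range_of_comp_eq_inf hmul a)
    (isProj_range_of_comp_eq_inf hmul b) (commute_of_comp_eq_inf hmul a b)

theorem isProj_range_sup_range_sup_range (hmul : ∀ a b, P a ∘ₗ P b = P (a ⊓ b)) (a b c : α) :
    IsProj (range (P a) ⊔ range (P b) ⊔ range (P c))
      (P a + P b + P c - P (a ⊓ b) - P (a ⊓ c) - P (b ⊓ c) + P (a ⊓ b ⊓ c)) := by
  have commute_c : Commute (P a + P b - P (a ⊓ b)) (P c) :=
    ((commute_of_comp_eq_inf hmul a c).add_left (commute_of_comp_eq_inf hmul b c)).sub_left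
      (commute_of_comp_eq_inf hmul (a ⊓ b) c)
  convert isProj_sup_of_commute (isProj_range_sup_range hmul a b)
    (isProj_range_of_comp_eq_inf hmul c) commute_c using 1
  simp only [sub_mul, add_mul, Module.End.mul_eq_comp, hmul]
  abel

theorem P123_eq_P3_iff_range_general (hmul : ∀ a b, P a ∘ₗ P b = P (a ⊓ b)) (a b c d : α) :
    P d = P a + P b + P c - P (a ⊓ b) - P (a ⊓ c) - P (b ⊓ c) + P (a ⊓ b ⊓ c) ↔
      range (P d) = range (P a) ⊔ range (P b) ⊔ range (P c) := by
  refine eq_iff_range_eq_of_commute (isProj_range_of_comp_eq_inf hmul d).isIdempotentElem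
    (isProj_range_sup_range_sup_range hmul a b c) ?_
  apply_rules [Commute.add_right, Commute.sub_right, commute_of_comp_eq_inf hmul]

end InclusionExclusion

/-- `P₁₂₃ = P⁽³⁾` if and only if the range of `P₁₂₃` equals the span of the
union of the ranges of the three two-slit filters. -/
theorem P123_eq_P3_iff_range {V : Type*} [AddCommGroup V] [Module ℝ V]
    (P : Finset (Fin 3) → V →ₗ[ℝ] V)
    (hP0 : P ∅ = 0)
    (hmul : ∀ J K : Finset (Fin 3), P J ∘ₗ P K = P (J ∩ K)) :
    P {0, 1, 2} = P {0, 1} + P {0, 2} + P {1, 2} - P {0} - P {1} - P {2} ↔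
      LinearMap.range (P {0, 1, 2}) =
        LinearMap.range (P {0, 1}) ⊔ LinearMap.range (P {0, 2}) ⊔
          LinearMap.range (P {1, 2}) := by
  simpa [Finset.inter_insert, hP0] using
    P123_eq_P3_iff_range_general hmul {0, 1} {0, 2} {1, 2} {0, 1, 2}
end

section
/- Proposition 1, (i) ⇔ (iii): Let V be a finite-dimensional real vector space, K ⊆ V a closed convex cone that spans V and contains no nontrivial linear subspace, and u : V → ℝ a linear functional with u(s) > 0 for every nonzero s ∈ K. Suppose each P_J maps K into K, and define F_J := {s ∈ K | P_J(s) = s}. Then the following are equivalent: (i) for every linear functional q with 0 ≤ q(s) ≤ u(s) for all s ∈ K and every s ∈ K, q(P_{123}(s) − P^(3)(s)) = 0 (no third-order interference); (iii) F_{123} ⊆ span(F_{12} ∪ F_{13} ∪ F_{23}). -/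
/-!
Since `u` is bounded below by a positive multiple of the norm on the closed cone `K`, every
functional is a linear combination of effects. Effects therefore separate points, and the absence of
interference means that the alternating sum `D = ∑ J ⊆ S, (-1) ^ #(S \ J) • P J` vanishes on `K`.

If `D s = 0` and `P S s = s`, solving for the term `J = S` writes `s` as a combination of the
`P J s` with `J ⊂ S`, each of which lies in a face `F (S \ {i})`. Conversely, `D` kills the range of
`P (S \ {i})`, because the terms `J` and `J ∪ {i}` cancel, while `D ∘ P S = D` reduces the vanishing
of `D` on `K` to its vanishing on `F S`. Three slits are the case `S = {0, 1, 2}`, with `P ∅ = 0`.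
-/

open Finset

section Effects

variable {𝕜 V : Type*} [Field 𝕜] [LinearOrder 𝕜] [IsStrictOrderedRing 𝕜]
  [AddCommGroup V] [Module 𝕜 V] {K : Set V} {u : V →ₗ[𝕜] 𝕜}

/-- An effect of the system `(K, u)`: a functional lying between `0` and `u` on the states `K`. -/
def IsEffect (K : Set V) (u q : V →ₗ[𝕜] 𝕜) : Prop :=
  ∀ s ∈ K, 0 ≤ q s ∧ q s ≤ u s

/-- `u` is an order unit of the dual space ordered by `K`: every functional is bounded in absolute
value on `K` by a multiple of `u`. Requiring the factor to be positive makes `u` nonnegative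
on `K`. -/
def IsOrderUnitOn (K : Set V) (u : V →ₗ[𝕜] 𝕜) : Prop :=
  ∀ f : V →ₗ[𝕜] 𝕜, ∃ C > 0, ∀ s ∈ K, |f s| ≤ C * u s

theorem IsOrderUnitOn.isEffect_self (hu : IsOrderUnitOn K u) : IsEffect K u u := by
  obtain ⟨C, hC, hCu⟩ := hu 0
  exact fun s hs => ⟨nonneg_of_mul_nonneg_right ((abs_nonneg _).trans (hCu s hs)) hC, le_rfl⟩

theorem isEffect_smul_add_of_abs_le {f : V →ₗ[𝕜] 𝕜} {C : 𝕜} (hC : 0 < C)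
    (hf : ∀ s ∈ K, |f s| ≤ C * u s) : IsEffect K u ((2 * C)⁻¹ • (C • u + f)) := by
  intro s hs
  obtain ⟨hlower, hupper⟩ := abs_le.1 (hf s hs)
  simp only [LinearMap.smul_apply, LinearMap.add_apply, smul_eq_mul]
  constructor
  · exact mul_nonneg (by positivity) (by linarith)
  · rw [inv_mul_le_iff₀ (by positivity)]
    linarith

theorem IsOrderUnitOn.span_isEffect_eq_top (hu : IsOrderUnitOn K u) :
    Submodule.span 𝕜 {q | IsEffect K u q} = ⊤ := by
  refine eq_top_iff.2 fun f _ => ?_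
  obtain ⟨C, hC, hf⟩ := hu f
  have hdecomp : f = (2 * C) • ((2 * C)⁻¹ • (C • u + f)) - C • u := by
    rw [smul_inv_smul₀ (by positivity), add_sub_cancel_left]
  rw [hdecomp]
  exact sub_mem
    (Submodule.smul_mem _ _ (Submodule.subset_span (isEffect_smul_add_of_abs_le hC hf)))
    (Submodule.smul_mem _ _ (Submodule.subset_span hu.isEffect_self))

theorem IsOrderUnitOn.forall_isEffect_apply_eq_zero_iff (hu : IsOrderUnitOn K u) {v : V} :
    (∀ q, IsEffect K u q → q v = 0) ↔ v = 0 := by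
  refine ⟨fun h => ?_, fun h q _ => by rw [h, map_zero]⟩
  have hspan : Submodule.span 𝕜 {q | IsEffect K u q} ≤ LinearMap.ker (Module.Dual.eval 𝕜 V v) :=
    Submodule.span_le.2 h
  rw [hu.span_isEffect_eq_top] at hspan
  exact (Module.forall_dual_apply_eq_zero_iff 𝕜 v).1 fun f => hspan (Submodule.mem_top (x := f))

end Effects

section ClosedCone

variable {V : Type*} [NormedAddCommGroup V] [NormedSpace ℝ V] {K : Set V}

theorem exists_pos_mul_norm_le_of_isClosed [ProperSpace V] (hclosed : IsClosed K)
    (hsmul : ∀ a : ℝ, 0 ≤ a → ∀ s ∈ K, a • s ∈ K) (u : V →L[ℝ] ℝ)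
    (hu : ∀ s ∈ K, s ≠ 0 → 0 < u s) : ∃ c > 0, ∀ s ∈ K, c * ‖s‖ ≤ u s := by
  have hcompact : IsCompact (K ∩ Metric.sphere 0 1) := (isCompact_sphere 0 1).inter_left hclosed
  obtain ⟨c, hc, hcu⟩ := hcompact.exists_forall_le' u.continuous.continuousOn
    fun s hs => hu s hs.1 (ne_zero_of_mem_unit_sphere ⟨s, hs.2⟩)
  refine ⟨c, hc, fun s hs => ?_⟩
  rcases eq_or_ne s 0 with rfl | hs0
  · simp
  have hnormalized : c ≤ u (‖s‖⁻¹ • s) :=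
    hcu _ ⟨hsmul _ (by positivity) s hs, by simp [norm_smul, hs0]⟩
  rwa [map_smul, smul_eq_mul, le_inv_mul_iff₀' (norm_pos_iff.2 hs0)] at hnormalized

theorem isOrderUnitOn_of_isClosed [FiniteDimensional ℝ V] (hclosed : IsClosed K)
    (hsmul : ∀ a : ℝ, 0 ≤ a → ∀ s ∈ K, a • s ∈ K) {u : V →ₗ[ℝ] ℝ}
    (hu : ∀ s ∈ K, s ≠ 0 → 0 < u s) : IsOrderUnitOn K u := by
  intro f
  have : ProperSpace V := FiniteDimensional.proper ℝ V
  obtain ⟨c, hc, hcu⟩ := exists_pos_mul_norm_le_of_isClosed hclosed hsmul u.toContinuousLinearMap hu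
  obtain ⟨B, hB, hfB⟩ := f.toContinuousLinearMap.bound
  refine ⟨B / c, by positivity, fun s hs => ?_⟩
  calc |f s| ≤ B * ‖s‖ := hfB s
    _ = B / c * (c * ‖s‖) := by field_simp
    _ ≤ B / c * u s := by gcongr; exact hcu s hs

end ClosedCone

section Interference

variable {ι : Type*} [DecidableEq ι]

theorem sum_powerset_neg_one_pow_smul_eq_zero {M : Type*} [AddCommGroup M] {S : Finset ι} {i : ι}
    (hi : i ∈ S) {g : Finset ι → M} (hg : ∀ J, g (insert i J) = g J) :
    ∑ J ∈ S.powerset, (-1 : ℤ) ^ #(S \ J) • g J = 0 := by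
  obtain ⟨T, hiT, rfl⟩ : ∃ T, i ∉ T ∧ insert i T = S :=
    ⟨S.erase i, notMem_erase i S, insert_erase hi⟩
  rw [sum_powerset_insert hiT, ← sum_add_distrib]
  refine sum_eq_zero fun J hJ => ?_
  have hiJ : i ∉ J := fun h => hiT (mem_powerset.1 hJ h)
  have hcard : #(insert i T \ J) = #(insert i T \ insert i J) + 1 := by
    rw [sdiff_insert, card_erase_add_one (by simp [hiJ])]
  rw [hg, hcard, pow_succ, mul_neg_one, neg_smul, neg_add_cancel]

variable {R V : Type*} [Ring R] [AddCommGroup V] [Module R V]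

/-- The interference of the slits `S`: the alternating sum of the filters `P J` over `J ⊆ S`.
Applied to a state and followed by an effect, it gives the interference expression of order
`#S`. -/
def interferenceMap (P : Finset ι → V →ₗ[R] V) (S : Finset ι) : V →ₗ[R] V :=
  ∑ J ∈ S.powerset, (-1 : ℤ) ^ #(S \ J) • P J

/-- The face `F_J` of the states in `K` that pass the filter `P J` unchanged. -/
def filteredFace (K : Set V) (P : Finset ι → V →ₗ[R] V) (J : Finset ι) : Set V :=
  {s ∈ K | P J s = s}

variable {K : Set V} {P : Finset ι → V →ₗ[R] V} {S : Finset ι}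

theorem interferenceMap_comp (hmul : ∀ J L, P J ∘ₗ P L = P (J ∩ L)) (S L : Finset ι) :
    interferenceMap P S ∘ₗ P L = ∑ J ∈ S.powerset, (-1 : ℤ) ^ #(S \ J) • P (J ∩ L) := by
  simp only [interferenceMap, ← Module.End.mul_eq_comp, sum_mul, smul_mul_assoc] at hmul ⊢
  simp only [hmul]

theorem interferenceMap_eq_add_sum_ssubsets (P : Finset ι → V →ₗ[R] V) (S : Finset ι) :
    interferenceMap P S = P S + ∑ J ∈ S.ssubsets, (-1 : ℤ) ^ #(S \ J) • P J := by
  rw [interferenceMap, ssubsets, ← add_sum_erase _ _ (mem_powerset_self S), Finset.sdiff_self,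
    card_empty, pow_zero, one_smul]

theorem interferenceMap_comp_of_not_subset (hmul : ∀ J L, P J ∘ₗ P L = P (J ∩ L)) {L : Finset ι}
    (hSL : ¬S ⊆ L) : interferenceMap P S ∘ₗ P L = 0 := by
  obtain ⟨i, hiS, hiL⟩ := not_subset.1 hSL
  rw [interferenceMap_comp hmul]
  exact sum_powerset_neg_one_pow_smul_eq_zero hiS fun J => by rw [insert_inter_of_notMem hiL]

theorem interferenceMap_comp_self (hmul : ∀ J L, P J ∘ₗ P L = P (J ∩ L)) :
    interferenceMap P S ∘ₗ P S = interferenceMap P S := by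
  rw [interferenceMap_comp hmul]
  exact sum_congr rfl fun J hJ => by rw [inter_eq_left.2 (mem_powerset.1 hJ)]

theorem apply_mem_filteredFace (hmul : ∀ J L, P J ∘ₗ P L = P (J ∩ L))
    (hPK : ∀ J, ∀ s ∈ K, P J s ∈ K) {J L : Finset ι} (hJL : J ⊆ L) {s : V} (hs : s ∈ K) :
    P J s ∈ filteredFace K P L :=
  ⟨hPK J s hs, by rw [← LinearMap.comp_apply, hmul, inter_eq_right.2 hJL]⟩

theorem mem_span_of_interferenceMap_apply_eq_zero (hmul : ∀ J L, P J ∘ₗ P L = P (J ∩ L))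
    (hPK : ∀ J, ∀ s ∈ K, P J s ∈ K) {s : V} (hs : s ∈ filteredFace K P S)
    (hzero : interferenceMap P S s = 0) :
    s ∈ Submodule.span R (⋃ i ∈ S, filteredFace K P (S.erase i)) := by
  have hsum : s + ∑ J ∈ S.ssubsets, (-1 : ℤ) ^ #(S \ J) • P J s = 0 := by
    simpa only [interferenceMap_eq_add_sum_ssubsets, LinearMap.add_apply, LinearMap.sum_apply,
      LinearMap.smul_apply, hs.2] using hzero
  rw [eq_neg_of_add_eq_zero_left hsum]
  refine neg_mem (sum_mem fun J hJ => zsmul_mem (Submodule.subset_span ?_) _)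
  obtain ⟨i, hi, hJi⟩ := ssubset_iff_exists_subset_erase.1 (mem_ssubsets.1 hJ)
  exact Set.mem_biUnion hi (apply_mem_filteredFace hmul hPK hJi hs.1)

theorem span_filteredFace_erase_le_ker (hmul : ∀ J L, P J ∘ₗ P L = P (J ∩ L)) :
    Submodule.span R (⋃ i ∈ S, filteredFace K P (S.erase i)) ≤
      LinearMap.ker (interferenceMap P S) := by
  refine Submodule.span_le.2 (Set.iUnion₂_subset fun i hi s hs => ?_)
  have hS : ¬S ⊆ S.erase i := fun h => notMem_erase i S (h hi)
  rw [SetLike.mem_coe, LinearMap.mem_ker, ← hs.2, ← LinearMap.comp_apply,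
    interferenceMap_comp_of_not_subset hmul hS, LinearMap.zero_apply]

theorem interferenceMap_eq_zero_iff_filteredFace_subset_span
    (hmul : ∀ J L, P J ∘ₗ P L = P (J ∩ L)) (hPK : ∀ J, ∀ s ∈ K, P J s ∈ K) :
    (∀ s ∈ K, interferenceMap P S s = 0) ↔
      filteredFace K P S ⊆ Submodule.span R (⋃ i ∈ S, filteredFace K P (S.erase i)) := by
  refine ⟨fun h s hs => mem_span_of_interferenceMap_apply_eq_zero hmul hPK hs (h s hs.1),
    fun h s hs => ?_⟩
  rw [← interferenceMap_comp_self hmul]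
  exact span_filteredFace_erase_le_ker hmul (h (apply_mem_filteredFace hmul hPK subset_rfl hs))

end Interference

theorem interferenceMap_three_slits {R V : Type*} [Ring R] [AddCommGroup V] [Module R V]
    {P : Finset (Fin 3) → V →ₗ[R] V} (hP0 : P ∅ = 0) :
    interferenceMap P {0, 1, 2} =
      P {0, 1, 2} - (P {0, 1} + P {0, 2} + P {1, 2} - P {0} - P {1} - P {2}) := by
  have hssubsets : ({0, 1, 2} : Finset (Fin 3)).ssubsets =
      {∅, {0}, {1}, {2}, {0, 1}, {0, 2}, {1, 2}} := by decide
  have hcard_singleton : ∀ i : Fin 3, #({0, 1, 2} \ {i} : Finset (Fin 3)) = 2 := by decide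
  have hcard_pair : ∀ i j : Fin 3, i < j → #({0, 1, 2} \ {i, j} : Finset (Fin 3)) = 1 := by decide
  rw [interferenceMap_eq_add_sum_ssubsets, hssubsets]
  repeat rw [sum_insert (by decide)]
  simp only [sum_singleton, hP0, hcard_singleton, hcard_pair 0 1 (by decide),
    hcard_pair 0 2 (by decide), hcard_pair 1 2 (by decide), smul_zero, neg_one_sq, pow_one,
    one_smul, neg_smul]
  abel

theorem biUnion_erase_three_slits {V : Type*} (F : Finset (Fin 3) → Set V) :
    ⋃ i ∈ ({0, 1, 2} : Finset (Fin 3)), F (({0, 1, 2} : Finset (Fin 3)).erase i) =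
      F {0, 1} ∪ F {0, 2} ∪ F {1, 2} := by
  have herase_zero : ({0, 1, 2} : Finset (Fin 3)).erase 0 = {1, 2} := by decide
  have herase_one : ({0, 1, 2} : Finset (Fin 3)).erase 1 = {0, 2} := by decide
  have herase_two : ({0, 1, 2} : Finset (Fin 3)).erase 2 = {0, 1} := by decide
  rw [set_biUnion_insert, set_biUnion_insert, set_biUnion_singleton, herase_zero, herase_one,
    herase_two, Set.union_comm, Set.union_comm (F {0, 2})]

theorem I3_zero_iff_face_subset_span_general {𝕜 V ι : Type*} [Field 𝕜] [LinearOrder 𝕜]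
    [IsStrictOrderedRing 𝕜] [AddCommGroup V] [Module 𝕜 V] [DecidableEq ι]
    {K : Set V} {u : V →ₗ[𝕜] 𝕜} (hu : IsOrderUnitOn K u)
    {P : Finset ι → V →ₗ[𝕜] V} (hmul : ∀ J L, P J ∘ₗ P L = P (J ∩ L))
    (hPK : ∀ J, ∀ s ∈ K, P J s ∈ K) (S : Finset ι) :
    (∀ q, IsEffect K u q → ∀ s ∈ K, q (interferenceMap P S s) = 0) ↔
      filteredFace K P S ⊆ Submodule.span 𝕜 (⋃ i ∈ S, filteredFace K P (S.erase i)) := by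
  rw [← interferenceMap_eq_zero_iff_filteredFace_subset_span hmul hPK]
  simp only [← hu.forall_isEffect_apply_eq_zero_iff]
  exact ⟨fun h s hs q hq => h q hq s hs, fun h q hq s hs => h s hs q hq⟩

/-- Proposition 1, (i) ⇔ (iii): the third-order interference expression
`I₃[q, {P_J}, s] = q(P₁₂₃(s) − P⁽³⁾(s))` vanishes for all effects `q` and all
states `s ∈ K` if and only if the face of three-slit-filtered states is
contained in the linear span of the union of the faces of two-slit-filtered
states. -/
theorem I3_zero_iff_face_subset_span {V : Type*} [NormedAddCommGroup V]
    [NormedSpace ℝ V] [FiniteDimensional ℝ V]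
    (K : Set V)
    (hclosed : IsClosed K)
    (hadd : ∀ s ∈ K, ∀ t ∈ K, s + t ∈ K)
    (hsmul : ∀ (a : ℝ), 0 ≤ a → ∀ s ∈ K, a • s ∈ K)
    (hspan : Submodule.span ℝ K = ⊤)
    (hpointed : ∀ s ∈ K, -s ∈ K → s = 0)
    (u : V →ₗ[ℝ] ℝ)
    (hu : ∀ s ∈ K, s ≠ 0 → 0 < u s)
    (P : Finset (Fin 3) → V →ₗ[ℝ] V)
    (hP0 : P ∅ = 0)
    (hmul : ∀ J L : Finset (Fin 3), P J ∘ₗ P L = P (J ∩ L))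
    (hPK : ∀ J : Finset (Fin 3), ∀ s ∈ K, P J s ∈ K)
    (F : Finset (Fin 3) → Set V)
    (hF : ∀ J : Finset (Fin 3), F J = {s ∈ K | P J s = s}) :
    (∀ q : V →ₗ[ℝ] ℝ, (∀ s ∈ K, 0 ≤ q s ∧ q s ≤ u s) →
        ∀ s ∈ K,
          q (P {0, 1, 2} s - (P {0, 1} + P {0, 2} + P {1, 2} - P {0} - P {1} - P {2}) s)
            = 0) ↔
      F {0, 1, 2} ⊆
        (Submodule.span ℝ (F {0, 1} ∪ F {0, 2} ∪ F {1, 2}) : Submodule ℝ V) := by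
  obtain rfl : F = filteredFace K P := funext hF
  rw [← biUnion_erase_three_slits,
    ← I3_zero_iff_face_subset_span_general (isOrderUnitOn_of_isClosed hclosed hsmul hu) hmul hPK,
    interferenceMap_three_slits hP0]
  rfl
end
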